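/- arXiv:1505.07369 — 3 statements merged into one kernel-verified Lean document; each statement's English description precedes it below -/
import Mathlib

section
/- Under the one-cluster model with finite fourth moments, for all j, k, ℓ ∈ {1, …, n}: E[(v + ε_j)(v + ε_k)(v + ε_ℓ) w] = τ² η^{-1} [ τ² (3 − κ_v) + κ_ε σ_j² · 1{j = k = ℓ} + σ_j² (1{j = k, j ≠ ℓ} − 1{j = k}) + σ_j² (1{j = ℓ, j ≠ k} − 1{j = ℓ}) + σ_k² (1{k = ℓ, k ≠ j} − 1{k = ℓ}) ], where w = (Σ_{h=1}^n λ_h − 1) v + Σ_{h=1}^n λ_h ε_h. -/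
open MeasureTheory ProbabilityTheory

/-!
The prediction error `w = ∑ λ_h (v + ε_h) - v` is uncorrelated with every observation `v + ε_l`:
`Cov(v + ε_l, w) = -τ²/η + λ_l σ_l² = 0`. Hence in the moment-cumulant formula for
`E[(v + ε_j)(v + ε_k)(v + ε_l) w]` every product of two covariances vanishes and only the joint
fourth cumulant survives. Joint cumulants are multilinear and vanish on independent blocks, so this
one is `-η⁻¹ κ₄(v)`, plus `λ_j κ₄(ε_j)` when `j = k = l`.
-/

section JointFourthCumulant

variable {Ω ι : Type*} [MeasurableSpace Ω] {μ : Measure Ω} {A B C D : Ω → ℝ} {X : ι → Ω → ℝ}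

/-- The joint fourth cumulant of four real random variables, written through central moments; it is
meaningful for variables in `L⁴`. -/
noncomputable def jointFourthCumulant (A B C D : Ω → ℝ) (μ : Measure Ω) : ℝ :=
  ∫ ω, (A ω - μ[A]) * (B ω - μ[B]) * (C ω - μ[C]) * (D ω - μ[D]) ∂μ
    - cov[A, B; μ] * cov[C, D; μ] - cov[A, C; μ] * cov[B, D; μ] - cov[A, D; μ] * cov[B, C; μ]

lemma jointFourthCumulant_swap :
    jointFourthCumulant A B C D μ = jointFourthCumulant B A C D μ := by
  simp only [jointFourthCumulant, covariance_comm A B, mul_comm (A _ - _)]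
  ring

lemma jointFourthCumulant_rotate :
    jointFourthCumulant A B C D μ = jointFourthCumulant B C D A μ := by
  have hprod (ω : Ω) : (A ω - μ[A]) * (B ω - μ[B]) * (C ω - μ[C]) * (D ω - μ[D])
      = (B ω - μ[B]) * (C ω - μ[C]) * (D ω - μ[D]) * (A ω - μ[A]) := by ring
  simp only [jointFourthCumulant, hprod, covariance_comm A]
  ring

lemma jointFourthCumulant_self_of_integral_eq_zero (hA : μ[A] = 0) :
    jointFourthCumulant A A A A μ = ∫ ω, A ω ^ 4 ∂μ - 3 * (∫ ω, A ω ^ 2 ∂μ) ^ 2 := by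
  have h₂ (ω : Ω) : A ω * A ω = A ω ^ 2 := by ring
  have h₄ (ω : Ω) : A ω ^ 2 * A ω * A ω = A ω ^ 4 := by ring
  simp only [jointFourthCumulant, covariance, hA, sub_zero, h₂, h₄]
  ring

lemma integral_mul_mul_mul_eq_jointFourthCumulant_add (hA : μ[A] = 0) (hB : μ[B] = 0)
    (hC : μ[C] = 0) (hD : μ[D] = 0) :
    ∫ ω, A ω * B ω * C ω * D ω ∂μ = jointFourthCumulant A B C D μ
      + cov[A, B; μ] * cov[C, D; μ] + cov[A, C; μ] * cov[B, D; μ]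
      + cov[A, D; μ] * cov[B, C; μ] := by
  simp only [jointFourthCumulant, hA, hB, hC, hD, sub_zero]
  ring

lemma integrable_mul_mul_mul_of_memLp_four {𝕜 : Type*} [NormedRing 𝕜] {f₁ f₂ f₃ f₄ : Ω → 𝕜}
    (h₁ : MemLp f₁ 4 μ) (h₂ : MemLp f₂ 4 μ) (h₃ : MemLp f₃ 4 μ) (h₄ : MemLp f₄ 4 μ) :
    Integrable (fun ω => f₁ ω * f₂ ω * f₃ ω * f₄ ω) μ := by
  have : ENNReal.HolderTriple 4 4 2 := ⟨by
    rw [← two_mul, show (4 : ENNReal) = 2 * 2 by norm_num,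
      ENNReal.mul_inv (by simp) (by simp), ← mul_assoc,
      ENNReal.mul_inv_cancel (by simp) (by simp), one_mul]⟩
  have h₁₂ : MemLp (f₁ * f₂) 2 μ := h₂.mul h₁
  have h₃₄ : MemLp (f₃ * f₄) 2 μ := h₄.mul h₃
  simpa only [Pi.mul_def, mul_assoc] using h₁₂.integrable_mul h₃₄

lemma memLp_two_of_memLp_four {E : Type*} [NormedAddCommGroup E] [IsFiniteMeasure μ] {f : Ω → E}
    (hf : MemLp f 4 μ) : MemLp f 2 μ :=
  hf.mono_exponent (by norm_num)

lemma integral_sum_mul [Fintype ι] (hX : ∀ i, Integrable (X i) μ) (a : ι → ℝ) :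
    ∫ ω, ∑ i, a i * X i ω ∂μ = ∑ i, a i * μ[X i] := by
  rw [integral_finsetSum _ fun i _ => (hX i).const_mul (a i)]
  simp only [integral_const_mul]

lemma memLp_sum_mul [Fintype ι] {p : ENNReal} (hX : ∀ i, MemLp (X i) p μ) (a : ι → ℝ) :
    MemLp (fun ω => ∑ i, a i * X i ω) p μ :=
  memLp_finsetSum _ fun i _ => (hX i).const_mul (a i)

lemma jointFourthCumulant_sum_left [Fintype ι] [IsFiniteMeasure μ] (hX : ∀ i, MemLp (X i) 4 μ)
    (hB : MemLp B 4 μ) (hC : MemLp C 4 μ) (hD : MemLp D 4 μ) (a : ι → ℝ) :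
    jointFourthCumulant (fun ω => ∑ i, a i * X i ω) B C D μ
      = ∑ i, a i * jointFourthCumulant (X i) B C D μ := by
  have hcov {Y : Ω → ℝ} (hY : MemLp Y 4 μ) :
      cov[fun ω => ∑ i, a i * X i ω, Y; μ] = ∑ i, a i * cov[X i, Y; μ] := by
    rw [covariance_fun_sum_left (fun i => (memLp_two_of_memLp_four (hX i)).const_mul (a i))
      (memLp_two_of_memLp_four hY)]
    simp only [covariance_const_mul_left]
  have hcentred {Y : Ω → ℝ} (hY : MemLp Y 4 μ) : MemLp (fun ω => Y ω - μ[Y]) 4 μ :=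
    hY.sub (memLp_const _)
  have hmoment : ∫ ω, (∑ i, a i * X i ω - ∫ ω', ∑ i, a i * X i ω' ∂μ) * (B ω - μ[B])
        * (C ω - μ[C]) * (D ω - μ[D]) ∂μ
      = ∑ i, a i * ∫ ω, (X i ω - μ[X i]) * (B ω - μ[B]) * (C ω - μ[C]) * (D ω - μ[D]) ∂μ := by
    rw [integral_sum_mul fun i => (hX i).integrable (by norm_num), ← integral_sum_mul fun i =>
      integrable_mul_mul_mul_of_memLp_four (hcentred (hX i)) (hcentred hB) (hcentred hC)
        (hcentred hD)]
    simp only [← Finset.sum_sub_distrib, ← mul_sub, Finset.sum_mul, mul_assoc]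
  simp only [jointFourthCumulant, hmoment, hcov hB, hcov hC, hcov hD, Finset.sum_mul,
    ← Finset.sum_sub_distrib]
  exact Finset.sum_congr rfl fun i _ => by ring

lemma jointFourthCumulant_eq_zero_of_indepFun_triple [IsProbabilityMeasure μ]
    (hA : MemLp A 2 μ) (hB : MemLp B 2 μ) (hC : MemLp C 2 μ) (hD : MemLp D 2 μ)
    (h : IndepFun (fun ω => (A ω, B ω, C ω)) D μ) : jointFourthCumulant A B C D μ = 0 := by
  have hAD : cov[A, D; μ] = 0 := (h.comp measurable_fst measurable_id).covariance_eq_zero hA hD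
  have hBD : cov[B, D; μ] = 0 :=
    (h.comp (measurable_fst.comp measurable_snd) measurable_id).covariance_eq_zero hB hD
  have hCD : cov[C, D; μ] = 0 :=
    (h.comp (measurable_snd.comp measurable_snd) measurable_id).covariance_eq_zero hC hD
  have hmeanD : ∫ ω, (D ω - μ[D]) ∂μ = 0 := by
    simp [integral_sub (hD.integrable (by norm_num)) (integrable_const _)]
  have hmoment : ∫ ω, (A ω - μ[A]) * (B ω - μ[B]) * (C ω - μ[C]) * (D ω - μ[D]) ∂μ = 0 := by
    have hind := h.comp
      (φ := fun x : ℝ × ℝ × ℝ => (x.1 - μ[A]) * (x.2.1 - μ[B]) * (x.2.2 - μ[C]))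
      (ψ := fun x => x - μ[D]) (by fun_prop) (by fun_prop)
    refine (hind.integral_fun_mul_eq_mul_integral ?_ ?_).trans (mul_eq_zero_of_right _ hmeanD)
    · exact ((hA.1.sub aestronglyMeasurable_const).mul
        (hB.1.sub aestronglyMeasurable_const)).mul (hC.1.sub aestronglyMeasurable_const)
    · exact hD.1.sub aestronglyMeasurable_const
  simp [jointFourthCumulant, hmoment, hAD, hBD, hCD]

lemma jointFourthCumulant_eq_zero_of_indepFun_pair [IsProbabilityMeasure μ]
    (hA : MemLp A 2 μ) (hB : MemLp B 2 μ) (hC : MemLp C 2 μ) (hD : MemLp D 2 μ)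
    (h : IndepFun (fun ω => (A ω, B ω)) (fun ω => (C ω, D ω)) μ) :
    jointFourthCumulant A B C D μ = 0 := by
  have hAC : cov[A, C; μ] = 0 := (h.comp measurable_fst measurable_fst).covariance_eq_zero hA hC
  have hAD : cov[A, D; μ] = 0 := (h.comp measurable_fst measurable_snd).covariance_eq_zero hA hD
  have hmoment : ∫ ω, (A ω - μ[A]) * (B ω - μ[B]) * (C ω - μ[C]) * (D ω - μ[D]) ∂μ
      = cov[A, B; μ] * cov[C, D; μ] := by
    have hind := h.comp (φ := fun x : ℝ × ℝ => (x.1 - μ[A]) * (x.2 - μ[B]))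
      (ψ := fun x : ℝ × ℝ => (x.1 - μ[C]) * (x.2 - μ[D])) (by fun_prop) (by fun_prop)
    simp only [mul_assoc (_ * _)]
    exact hind.integral_fun_mul_eq_mul_integral
      ((hA.1.sub aestronglyMeasurable_const).mul (hB.1.sub aestronglyMeasurable_const))
      ((hC.1.sub aestronglyMeasurable_const).mul (hD.1.sub aestronglyMeasurable_const))
  simp [jointFourthCumulant, hmoment, hAC, hAD]

lemma indepFun_triple_of_iIndepFun {β : Type*} [MeasurableSpace β] {Y : ι → Ω → β}
    (hY : iIndepFun Y μ) (hmeas : ∀ i, AEMeasurable (Y i) μ) {a b c d : ι}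
    (had : a ≠ d) (hbd : b ≠ d) (hcd : c ≠ d) :
    IndepFun (fun ω => (Y a ω, Y b ω, Y c ω)) (Y d) μ := by
  classical
  have hdisj : Disjoint ({a, b, c} : Finset ι) {d} := by simp [had.symm, hbd.symm, hcd.symm]
  exact (hY.indepFun_finset₀ _ _ hdisj hmeas).comp
    (φ := fun y : ({a, b, c} : Finset ι) → β =>
      (y ⟨a, by simp⟩, y ⟨b, by simp⟩, y ⟨c, by simp⟩))
    (ψ := fun y : ({d} : Finset ι) → β => y ⟨d, by simp⟩) (by fun_prop) (by fun_prop)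

lemma jointFourthCumulant_eq_zero_of_iIndepFun (hX : iIndepFun X μ) (hL : ∀ i, MemLp (X i) 2 μ)
    {a b c d : ι} (hne : ¬(a = b ∧ a = c ∧ a = d)) :
    jointFourthCumulant (X a) (X b) (X c) (X d) μ = 0 := by
  have := hX.isProbabilityMeasure
  have hmeas (i : ι) : AEMeasurable (X i) μ := (hL i).aemeasurable
  have htriple {i j k l : ι} (hil : i ≠ l) (hjl : j ≠ l) (hkl : k ≠ l) :
      jointFourthCumulant (X i) (X j) (X k) (X l) μ = 0 :=
    jointFourthCumulant_eq_zero_of_indepFun_triple (hL i) (hL j) (hL k) (hL l)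
      (indepFun_triple_of_iIndepFun hX hmeas hil hjl hkl)
  have hpair {i j k l : ι} (hik : i ≠ k) (hil : i ≠ l) (hjk : j ≠ k) (hjl : j ≠ l) :
      jointFourthCumulant (X i) (X j) (X k) (X l) μ = 0 :=
    jointFourthCumulant_eq_zero_of_indepFun_pair (hL i) (hL j) (hL k) (hL l)
      (hX.indepFun_prodMk_prodMk₀ hmeas i j k l hik hil hjk hjl)
  have hblocks : (b ≠ a ∧ c ≠ a ∧ d ≠ a) ∨ (c ≠ b ∧ d ≠ b ∧ a ≠ b) ∨ (d ≠ c ∧ a ≠ c ∧ b ≠ c)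
      ∨ (a ≠ d ∧ b ≠ d ∧ c ≠ d) ∨ (a ≠ c ∧ a ≠ d ∧ b ≠ c ∧ b ≠ d)
      ∨ (b ≠ d ∧ b ≠ a ∧ c ≠ d ∧ c ≠ a) ∨ (b ≠ a ∧ b ≠ c ∧ d ≠ a ∧ d ≠ c) := by
    grind
  rcases hblocks with ⟨h₁, h₂, h₃⟩ | ⟨h₁, h₂, h₃⟩ | ⟨h₁, h₂, h₃⟩ | ⟨h₁, h₂, h₃⟩
    | ⟨h₁, h₂, h₃, h₄⟩ | ⟨h₁, h₂, h₃, h₄⟩ | ⟨h₁, h₂, h₃, h₄⟩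
  · exact jointFourthCumulant_rotate.trans (htriple h₁ h₂ h₃)
  · exact (jointFourthCumulant_rotate.trans jointFourthCumulant_rotate).trans (htriple h₁ h₂ h₃)
  · exact jointFourthCumulant_rotate.symm.trans (htriple h₁ h₂ h₃)
  · exact htriple h₁ h₂ h₃
  · exact hpair h₁ h₂ h₃ h₄
  · exact jointFourthCumulant_rotate.trans (hpair h₁ h₂ h₃ h₄)
  · rw [jointFourthCumulant_rotate, jointFourthCumulant_swap, jointFourthCumulant_rotate]
    exact hpair h₁ h₂ h₃ h₄

lemma jointFourthCumulant_sum_sum_sum_sum_of_iIndepFun [Fintype ι] (hX : iIndepFun X μ)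
    (hL : ∀ i, MemLp (X i) 4 μ) (a b c d : ι → ℝ) :
    jointFourthCumulant (fun ω => ∑ i, a i * X i ω) (fun ω => ∑ i, b i * X i ω)
        (fun ω => ∑ i, c i * X i ω) (fun ω => ∑ i, d i * X i ω) μ
      = ∑ i, a i * b i * c i * d i * jointFourthCumulant (X i) (X i) (X i) (X i) μ := by
  classical
  have := hX.isProbabilityMeasure
  let κ₄ (i : ι) : ℝ := jointFourthCumulant (X i) (X i) (X i) (X i) μ
  have hdiag (i j k l : ι) : jointFourthCumulant (X l) (X i) (X j) (X k) μ
      = if l = k then if k = j then if j = i then κ₄ i else 0 else 0 else 0 := by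
    split_ifs with hlk hkj hji
    · rw [hlk, hkj, hji]
    all_goals
      exact jointFourthCumulant_eq_zero_of_iIndepFun hX (fun i => memLp_two_of_memLp_four (hL i))
        (by grind)
  have hb := memLp_sum_mul hL b
  have hc := memLp_sum_mul hL c
  have hd := memLp_sum_mul hL d
  rw [jointFourthCumulant_sum_left hL hb hc hd]
  refine Finset.sum_congr rfl fun i _ => ?_
  have hexpand : jointFourthCumulant (X i) (fun ω => ∑ i, b i * X i ω)
        (fun ω => ∑ i, c i * X i ω) (fun ω => ∑ i, d i * X i ω) μ
      = ∑ j, b j * ∑ k, c k * ∑ l, d l * jointFourthCumulant (X l) (X i) (X j) (X k) μ := by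
    rw [jointFourthCumulant_rotate, jointFourthCumulant_sum_left hL hc hd (hL i)]
    refine Finset.sum_congr rfl fun j _ => congrArg (b j * ·) ?_
    rw [jointFourthCumulant_rotate, jointFourthCumulant_sum_left hL hd (hL i) (hL j)]
    refine Finset.sum_congr rfl fun k _ => congrArg (c k * ·) ?_
    rw [jointFourthCumulant_rotate, jointFourthCumulant_sum_left hL (hL i) (hL j) (hL k)]
  rw [hexpand]
  simp only [hdiag, mul_ite, mul_zero, Finset.sum_ite_eq', Finset.mem_univ, if_true]
  simp only [κ₄]
  ring

lemma covariance_sum_sum_of_iIndepFun [Fintype ι] (hX : iIndepFun X μ)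
    (hL : ∀ i, MemLp (X i) 2 μ) (a b : ι → ℝ) :
    cov[fun ω => ∑ i, a i * X i ω, fun ω => ∑ i, b i * X i ω; μ]
      = ∑ i, a i * b i * Var[X i; μ] := by
  have := hX.isProbabilityMeasure
  rw [covariance_fun_sum_fun_sum (fun i => (hL i).const_mul (a i))
    fun i => (hL i).const_mul (b i)]
  refine Finset.sum_congr rfl fun i _ => ?_
  rw [Finset.sum_eq_single_of_mem i (Finset.mem_univ i)]
  · rw [covariance_const_mul_left, covariance_const_mul_right,
      covariance_self (hL i).aemeasurable, mul_assoc]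
  · intro j _ hji
    rw [covariance_const_mul_left, covariance_const_mul_right,
      (hX.indepFun hji.symm).covariance_eq_zero (hL i) (hL j), mul_zero, mul_zero]

lemma integral_sum_mul_sum_mul_sum_mul_sum_of_covariance_eq_zero [Fintype ι] (hX : iIndepFun X μ)
    (hL : ∀ i, MemLp (X i) 4 μ) (hmean : ∀ i, μ[X i] = 0) {a b c d : ι → ℝ}
    (had : cov[fun ω => ∑ i, a i * X i ω, fun ω => ∑ i, d i * X i ω; μ] = 0)
    (hbd : cov[fun ω => ∑ i, b i * X i ω, fun ω => ∑ i, d i * X i ω; μ] = 0)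
    (hcd : cov[fun ω => ∑ i, c i * X i ω, fun ω => ∑ i, d i * X i ω; μ] = 0) :
    ∫ ω, (∑ i, a i * X i ω) * (∑ i, b i * X i ω) * (∑ i, c i * X i ω) * (∑ i, d i * X i ω) ∂μ
      = ∑ i, a i * b i * c i * d i * (∫ ω, X i ω ^ 4 ∂μ - 3 * (∫ ω, X i ω ^ 2 ∂μ) ^ 2) := by
  have := hX.isProbabilityMeasure
  have hmean_sum (e : ι → ℝ) : ∫ ω, ∑ i, e i * X i ω ∂μ = 0 := by
    simp [integral_sum_mul fun i => (hL i).integrable (by norm_num), hmean]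
  rw [integral_mul_mul_mul_eq_jointFourthCumulant_add (hmean_sum a) (hmean_sum b) (hmean_sum c)
    (hmean_sum d), had, hbd, hcd, jointFourthCumulant_sum_sum_sum_sum_of_iIndepFun hX hL]
  simp only [jointFourthCumulant_self_of_integral_eq_zero (hmean _), mul_zero, zero_mul, add_zero]

end JointFourthCumulant

section NestedError

variable {ι : Type*}

/-- The coefficients of the observation `v + ε_j` of the nested error model with respect to the
family `(v, ε)` indexed by `Option ι`, in which `none` is the index of `v`. -/
def observationCoeff [DecidableEq ι] (j : ι) : Option ι → ℝ :=
  fun i => i.elim 1 (Pi.single j 1)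

/-- The coefficients of the prediction error `(∑ λ_h - 1) v + ∑ λ_h ε_h` with respect to the family
`(v, ε)` indexed by `Option ι`, in which `none` is the index of `v`. -/
def predictionErrorCoeff [Fintype ι] (lam : ι → ℝ) : Option ι → ℝ :=
  fun i => i.elim (∑ h, lam h - 1) lam

lemma sum_observationCoeff_mul [Fintype ι] [DecidableEq ι] (j : ι) (x : Option ι → ℝ) :
    ∑ i, observationCoeff j i * x i = x none + x (some j) := by
  simp [observationCoeff, Fintype.sum_option, Pi.single_apply]

lemma sum_predictionErrorCoeff_mul [Fintype ι] (lam : ι → ℝ) (x : Option ι → ℝ) :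
    ∑ i, predictionErrorCoeff lam i * x i
      = (∑ h, lam h - 1) * x none + ∑ h, lam h * x (some h) := by
  simp [predictionErrorCoeff, Fintype.sum_option]

lemma one_add_mul_sum_inv_pos [Fintype ι] {s : ι → ℝ} {τsq : ℝ} (hτsq : 0 ≤ τsq)
    (hs : ∀ h, 0 ≤ s h) : 0 < 1 + τsq * ∑ h, (s h)⁻¹ := by
  have hsum : 0 ≤ ∑ h, (s h)⁻¹ := Finset.sum_nonneg fun h _ => inv_nonneg.2 (hs h)
  positivity

lemma sum_shrinkage_sub_one [Fintype ι] {s lam : ι → ℝ} {τsq η : ℝ} (hη₀ : η ≠ 0)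
    (hη : η = 1 + τsq * ∑ h, (s h)⁻¹) (hlam : ∀ h, lam h = τsq * (s h)⁻¹ * η⁻¹) :
    ∑ h, lam h - 1 = -η⁻¹ := by
  calc ∑ h, lam h - 1 = (η - 1) * η⁻¹ - 1 := by
        simp only [hlam, ← Finset.sum_mul, ← Finset.mul_sum]
        rw [hη, add_sub_cancel_left]
    _ = -η⁻¹ := by field_simp; ring

lemma covariance_observation_predictionError_eq_zero {Ω : Type*} [MeasurableSpace Ω]
    {μ : Measure Ω} [Fintype ι] [DecidableEq ι] {X : Option ι → Ω → ℝ} (hX : iIndepFun X μ)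
    (hL : ∀ i, MemLp (X i) 2 μ) {lam : ι → ℝ} {m : ι}
    (hbalance : lam m * Var[X (some m); μ] = (1 - ∑ h, lam h) * Var[X none; μ]) :
    cov[fun ω => ∑ i, observationCoeff m i * X i ω,
      fun ω => ∑ i, predictionErrorCoeff lam i * X i ω; μ] = 0 := by
  rw [covariance_sum_sum_of_iIndepFun hX hL]
  simp only [mul_assoc, sum_observationCoeff_mul]
  simp only [predictionErrorCoeff, Option.elim]
  linear_combination hbalance

theorem stmt_10_general {Ω : Type*} [MeasurableSpace Ω] {μ : Measure Ω} [Fintype ι]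
    [DecidableEq ι] {v : Ω → ℝ} {ε : ι → Ω → ℝ}
    (hindep : iIndepFun (fun i : Option ι => i.elim v ε) μ)
    {τsq : ℝ} {s : ι → ℝ} (hs : ∀ j, 0 < s j)
    (hv4 : MemLp v 4 μ) (hε4 : ∀ j, MemLp (ε j) 4 μ)
    (hEv : ∫ ω, v ω ∂μ = 0) (hEvsq : ∫ ω, v ω ^ 2 ∂μ = τsq)
    (hEε : ∀ j, ∫ ω, ε j ω ∂μ = 0) (hEεsq : ∀ j, ∫ ω, ε j ω ^ 2 ∂μ = s j)
    {κv : ℝ} {κε : ι → ℝ} (hEv4 : ∫ ω, v ω ^ 4 ∂μ = κv * τsq ^ 2)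
    (hEε4 : ∀ j, ∫ ω, ε j ω ^ 4 ∂μ = κε j * s j ^ 2)
    {η : ℝ} (hη : η = 1 + τsq * ∑ h, (s h)⁻¹)
    {lam : ι → ℝ} (hlam : ∀ j, lam j = τsq * (s j)⁻¹ * η⁻¹)
    {w : Ω → ℝ} (hw : ∀ ω, w ω = (∑ h, lam h - 1) * v ω + ∑ h, lam h * ε h ω) (j k l : ι) :
    ∫ ω, (v ω + ε j ω) * (v ω + ε k ω) * (v ω + ε l ω) * w ω ∂μ
      = τsq * η⁻¹ * (τsq * (3 - κv) + if j = k ∧ k = l then (κε j - 3) * s j else 0) := by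
  have := hindep.isProbabilityMeasure
  set X : Option ι → Ω → ℝ := fun i => i.elim v ε
  have hX4 (i : Option ι) : MemLp (X i) 4 μ := by cases i <;> simp [X, hv4, hε4]
  have hmean (i : Option ι) : μ[X i] = 0 := by cases i <;> simp [X, hEv, hEε]
  have hη₀ : η ≠ 0 := by
    have hτsq : 0 ≤ τsq := hEvsq ▸ integral_nonneg fun ω => sq_nonneg (v ω)
    exact hη ▸ (one_add_mul_sum_inv_pos hτsq fun h => (hs h).le).ne'
  have hlam_sum : ∑ h, lam h - 1 = -η⁻¹ := sum_shrinkage_sub_one hη₀ hη hlam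
  have hlam_mul (h : ι) : lam h * s h = τsq * η⁻¹ := by
    rw [hlam, mul_right_comm, inv_mul_cancel_right₀ (hs h).ne']
  have hvar (i : Option ι) : Var[X i; μ] = ∫ ω, X i ω ^ 2 ∂μ :=
    variance_of_integral_eq_zero (hX4 i).aemeasurable (hmean i)
  have huncorrelated (m : ι) : cov[fun ω => ∑ i, observationCoeff m i * X i ω,
      fun ω => ∑ i, predictionErrorCoeff lam i * X i ω; μ] = 0 := by
    refine covariance_observation_predictionError_eq_zero hindep
      (fun i => memLp_two_of_memLp_four (hX4 i)) ?_
    rw [hvar, hvar]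
    simp only [X, Option.elim, hEvsq, hEεsq]
    linear_combination hlam_mul m + τsq * hlam_sum
  have hcumulant := integral_sum_mul_sum_mul_sum_mul_sum_of_covariance_eq_zero hindep hX4 hmean
    (huncorrelated j) (huncorrelated k) (huncorrelated l)
  simp only [mul_assoc, sum_observationCoeff_mul, sum_predictionErrorCoeff_mul] at hcumulant
  simp only [mul_assoc, hw]
  refine hcumulant.trans ?_
  simp only [observationCoeff, predictionErrorCoeff, Option.elim, X, hEvsq, hEεsq, hEv4, hEε4,
    hlam_sum, Pi.single_apply]
  rcases eq_or_ne j k with rfl | hjk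
  · rcases eq_or_ne j l with rfl | hjl
    · simp only [and_self, if_true]
      linear_combination (κε j - 3) * s j * hlam_mul j
    · simp only [hjl, and_false, if_true, if_false]
      ring
  · simp only [hjk, false_and, if_false]
    ring

end NestedError

/-- In the one-cluster model with finite fourth moments,
`E[(v+ε_j)(v+ε_k)(v+ε_ℓ) w] = τ² η⁻¹ [τ²(3−κ_v) + κ_ε σ_j² 1{j=k=ℓ}
+ σ_j²(1{j=k, j≠ℓ} − 1{j=k}) + σ_j²(1{j=ℓ, j≠k} − 1{j=ℓ}) + σ_k²(1{k=ℓ, k≠j} − 1{k=ℓ})]`,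
where `w = (∑ λ_h − 1) v + ∑ λ_h ε_h`. -/
theorem stmt_10 {Ω : Type*} [MeasurableSpace Ω] (μ : Measure Ω) [IsProbabilityMeasure μ]
    (n : ℕ) (hn : 1 ≤ n) (v : Ω → ℝ) (ε : Fin n → Ω → ℝ)
    (hv : Measurable v) (hε : ∀ j, Measurable (ε j))
    (hindep : iIndepFun (m := fun _ : Option (Fin n) => (inferInstance : MeasurableSpace ℝ))
      (fun i => Option.elim i v ε) μ)
    (τsq : ℝ) (hτ : 0 ≤ τsq) (s : Fin n → ℝ) (hs : ∀ j, 0 < s j)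
    (hv4 : MemLp v 4 μ) (hε4 : ∀ j, MemLp (ε j) 4 μ)
    (hEv : ∫ ω, v ω ∂μ = 0) (hEvsq : ∫ ω, (v ω) ^ 2 ∂μ = τsq)
    (hEε : ∀ j, ∫ ω, ε j ω ∂μ = 0) (hEεsq : ∀ j, ∫ ω, (ε j ω) ^ 2 ∂μ = s j)
    (hEv3 : ∫ ω, (v ω) ^ 3 ∂μ = 0) (hEε3 : ∀ j, ∫ ω, (ε j ω) ^ 3 ∂μ = 0)
    (κv κε : ℝ) (hEv4 : ∫ ω, (v ω) ^ 4 ∂μ = κv * τsq ^ 2)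
    (hEε4 : ∀ j, ∫ ω, (ε j ω) ^ 4 ∂μ = κε * (s j) ^ 2)
    (η : ℝ) (hη : η = 1 + τsq * ∑ h, (s h)⁻¹)
    (lam : Fin n → ℝ) (hlam : ∀ j, lam j = τsq * (s j)⁻¹ * η⁻¹)
    (w : Ω → ℝ) (hw : ∀ ω, w ω = (∑ h, lam h - 1) * v ω + ∑ h, lam h * ε h ω) :
    ∀ j k l, ∫ ω, (v ω + ε j ω) * (v ω + ε k ω) * (v ω + ε l ω) * w ω ∂μ
      = τsq * η⁻¹ * (τsq * (3 - κv)
          + κε * s j * (if j = k ∧ k = l then 1 else 0)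
          + s j * ((if j = k ∧ j ≠ l then 1 else 0) - (if j = k then 1 else 0))
          + s j * ((if j = l ∧ j ≠ k then 1 else 0) - (if j = l then 1 else 0))
          + s k * ((if k = l ∧ k ≠ j then 1 else 0) - (if k = l then 1 else 0))) := by
  intro j k l
  -- Each difference `1{a = b, a ≠ c} - 1{a = b}` equals `-1{j = k = l}`; together they give `-3`.
  rw [stmt_10_general hindep hs hv4 hε4 hEv hEvsq hEε hEεsq hEv4 hEε4 hη hlam hw]
  grind
end

section
/- Under the one-cluster model with finite fourth moments, for all j, k ∈ {1, …, n}: Σ_{ℓ=1}^n E[(v + ε_j)(v + ε_k)(v + ε_ℓ) w] = τ² η^{-1} [ n τ² (3 − κ_v) + σ_j² (κ_ε − 3) · 1{j = k} ], where w = (Σ_{h=1}^n λ_h − 1) v + Σ_{h=1}^n λ_h ε_h. -/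
open MeasureTheory ProbabilityTheory

/-!
The variable `w` is the error of the best linear predictor of `v`, so it is uncorrelated with each
response `v + ε_ℓ`. All products of covariances in the moment-cumulant formula for
`E[(v + ε_j)(v + ε_k)(v + ε_ℓ) w]` therefore vanish, and the moment is a fourth joint cumulant.
Joint cumulants are multilinear and annihilate mixed arguments from an independent family, so only
the fourth cumulants of `v` and, when `j = k = ℓ`, of `ε_j` survive.
-/

section FourthJointCumulant

variable {Ω ι : Type*} [MeasurableSpace Ω] {μ : Measure Ω} {X Y Z W : Ω → ℝ}

/-- The joint cumulant `κ(X, Y, Z, W)` of four real random variables, expressed through their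
central moments: it is meaningful when all four variables are in `L⁴`. -/
noncomputable def fourthJointCumulant (X Y Z W : Ω → ℝ) (μ : Measure Ω) : ℝ :=
  ∫ ω, (X ω - μ[X]) * (Y ω - μ[Y]) * (Z ω - μ[Z]) * (W ω - μ[W]) ∂μ
    - cov[X, Y; μ] * cov[Z, W; μ] - cov[X, Z; μ] * cov[Y, W; μ] - cov[X, W; μ] * cov[Y, Z; μ]

lemma integrable_mul_mul_mul_of_memLp_four_s11 (hX : MemLp X 4 μ) (hY : MemLp Y 4 μ)
    (hZ : MemLp Z 4 μ) (hW : MemLp W 4 μ) :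
    Integrable (fun ω => X ω * Y ω * Z ω * W ω) μ := by
  have : ENNReal.HolderTriple 4 4 2 := ⟨by
    rw [← two_mul, show (4 : ENNReal) = 2 * 2 by norm_num,
      ENNReal.mul_inv (by simp) (by simp), ENNReal.mul_inv_cancel_left (by simp) (by simp)]⟩
  have hXY : MemLp (fun ω => X ω * Y ω) 2 μ := hY.mul' hX
  have hZW : MemLp (fun ω => Z ω * W ω) 2 μ := hW.mul' hZ
  simpa only [Pi.mul_def, ← mul_assoc] using hXY.integrable_mul hZW

lemma fourthJointCumulant_swap (X Y Z W : Ω → ℝ) :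
    fourthJointCumulant X Y Z W μ = fourthJointCumulant Y X Z W μ := by
  simp only [fourthJointCumulant, covariance_comm Y X, mul_comm (Y _ - _)]
  ring

lemma fourthJointCumulant_rotate (X Y Z W : Ω → ℝ) :
    fourthJointCumulant X Y Z W μ = fourthJointCumulant Y Z W X μ := by
  have hintegrand : ∀ ω, (X ω - μ[X]) * (Y ω - μ[Y]) * (Z ω - μ[Z]) * (W ω - μ[W])
      = (Y ω - μ[Y]) * (Z ω - μ[Z]) * (W ω - μ[W]) * (X ω - μ[X]) := fun ω => by ring
  simp only [fourthJointCumulant, hintegrand, covariance_comm _ X]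
  ring

lemma fourthJointCumulant_self_of_integral_eq_zero (hX : μ[X] = 0) :
    fourthJointCumulant X X X X μ = ∫ ω, X ω ^ 4 ∂μ - 3 * (∫ ω, X ω ^ 2 ∂μ) ^ 2 := by
  simp only [fourthJointCumulant, covariance, hX, sub_zero, ← pow_succ, ← pow_two]
  ring

lemma integral_mul_eq_fourthJointCumulant_of_covariance_eq_zero
    (hX : μ[X] = 0) (hY : μ[Y] = 0) (hZ : μ[Z] = 0) (hW : μ[W] = 0)
    (hXW : cov[X, W; μ] = 0) (hYW : cov[Y, W; μ] = 0) (hZW : cov[Z, W; μ] = 0) :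
    ∫ ω, X ω * Y ω * Z ω * W ω ∂μ = fourthJointCumulant X Y Z W μ := by
  simp [fourthJointCumulant, hX, hY, hZ, hW, hXW, hYW, hZW]

lemma fourthJointCumulant_sum_mul_left [Fintype ι] [IsFiniteMeasure μ] {X : ι → Ω → ℝ}
    (hX : ∀ i, MemLp (X i) 4 μ) (hY : MemLp Y 4 μ) (hZ : MemLp Z 4 μ) (hW : MemLp W 4 μ)
    (a : ι → ℝ) :
    fourthJointCumulant (fun ω => ∑ i, a i * X i ω) Y Z W μ
      = ∑ i, a i * fourthJointCumulant (X i) Y Z W μ := by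
  have hX₂ : ∀ i, MemLp (fun ω => a i * X i ω) 2 μ := fun i =>
    ((hX i).mono_exponent (by norm_num)).const_mul (a i)
  have hcov : ∀ {V : Ω → ℝ}, MemLp V 4 μ →
      cov[fun ω => ∑ i, a i * X i ω, V; μ] = ∑ i, a i * cov[X i, V; μ] := fun hV => by
    simp only [covariance_fun_sum_left hX₂ (hV.mono_exponent (by norm_num)),
      covariance_const_mul_left]
  have hmean : μ[fun ω => ∑ i, a i * X i ω] = ∑ i, a i * μ[X i] := by
    rw [integral_finsetSum _ fun i _ => (hX₂ i).integrable (by norm_num)]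
    simp only [integral_const_mul]
  have hcenter : ∀ ω, (∑ i, a i * X i ω - ∑ i, a i * μ[X i])
      * (Y ω - μ[Y]) * (Z ω - μ[Z]) * (W ω - μ[W])
      = ∑ i, a i * ((X i ω - μ[X i]) * (Y ω - μ[Y]) * (Z ω - μ[Z]) * (W ω - μ[W])) := fun ω => by
    simp only [← Finset.sum_sub_distrib, ← mul_sub, Finset.sum_mul, mul_assoc]
  have hint : ∀ i, Integrable
      (fun ω => (X i ω - μ[X i]) * (Y ω - μ[Y]) * (Z ω - μ[Z]) * (W ω - μ[W])) μ := fun i =>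
    integrable_mul_mul_mul_of_memLp_four_s11 ((hX i).sub (memLp_const _)) (hY.sub (memLp_const _))
      (hZ.sub (memLp_const _)) (hW.sub (memLp_const _))
  simp only [fourthJointCumulant, hmean, hcenter, hcov hY, hcov hZ, hcov hW]
  rw [integral_finsetSum _ fun i _ => (hint i).const_mul (a i)]
  simp only [integral_const_mul, Finset.sum_mul, ← Finset.sum_sub_distrib]
  exact Finset.sum_congr rfl fun i _ => by ring

lemma fourthJointCumulant_sum_mul [Fintype ι] [IsFiniteMeasure μ] {X : ι → Ω → ℝ}
    (hX : ∀ i, MemLp (X i) 4 μ) (a b c d : ι → ℝ) :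
    fourthJointCumulant (fun ω => ∑ i, a i * X i ω) (fun ω => ∑ i, b i * X i ω)
        (fun ω => ∑ i, c i * X i ω) (fun ω => ∑ i, d i * X i ω) μ
      = ∑ i, a i * ∑ j, b j * ∑ k, c k * ∑ l, d l
          * fourthJointCumulant (X i) (X j) (X k) (X l) μ := by
  have hsum : ∀ a : ι → ℝ, MemLp (fun ω => ∑ i, a i * X i ω) 4 μ := fun a =>
    memLp_finsetSum _ fun i _ => (hX i).const_mul (a i)
  -- Rotating after each expansion brings the next argument to the front; four rotations cancel.
  have hexpand : ∀ (a : ι → ℝ) {Y Z W : Ω → ℝ}, MemLp Y 4 μ → MemLp Z 4 μ → MemLp W 4 μ →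
      fourthJointCumulant (fun ω => ∑ i, a i * X i ω) Y Z W μ
        = ∑ i, a i * fourthJointCumulant Y Z W (X i) μ := fun a _ _ _ hY hZ hW => by
    simp only [fourthJointCumulant_sum_mul_left hX hY hZ hW, fourthJointCumulant_rotate (X _)]
  simp only [hexpand, hsum, hX]

lemma fourthJointCumulant_eq_zero_of_indepFun_triple [IsProbabilityMeasure μ]
    (hX : MemLp X 2 μ) (hY : MemLp Y 2 μ) (hZ : MemLp Z 2 μ) (hW : MemLp W 2 μ)
    (h : IndepFun X (fun ω => (Y ω, Z ω, W ω)) μ) :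
    fourthJointCumulant X Y Z W μ = 0 := by
  have hXY : cov[X, Y; μ] = 0 :=
    IndepFun.covariance_eq_zero (h.comp measurable_id measurable_fst) hX hY
  have hXZ : cov[X, Z; μ] = 0 :=
    IndepFun.covariance_eq_zero (h.comp measurable_id measurable_snd.fst) hX hZ
  have hXW : cov[X, W; μ] = 0 :=
    IndepFun.covariance_eq_zero (h.comp measurable_id measurable_snd.snd) hX hW
  have hfactor : ∫ ω, (X ω - μ[X]) * ((Y ω - μ[Y]) * (Z ω - μ[Z]) * (W ω - μ[W])) ∂μ
      = (∫ ω, X ω - μ[X] ∂μ) * ∫ ω, (Y ω - μ[Y]) * (Z ω - μ[Z]) * (W ω - μ[W]) ∂μ :=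
    h.integral_fun_comp_mul_comp
      (f := fun x => x - μ[X]) (g := fun y => (y.1 - μ[Y]) * (y.2.1 - μ[Z]) * (y.2.2 - μ[W]))
      hX.aemeasurable (hY.aemeasurable.prodMk (hZ.aemeasurable.prodMk hW.aemeasurable))
      (by fun_prop) (by fun_prop)
  have hcentered : ∫ ω, X ω - μ[X] ∂μ = 0 := by
    simp [integral_sub (hX.integrable (by norm_num)) (integrable_const _)]
  simp only [← mul_assoc] at hfactor
  rw [fourthJointCumulant, hfactor, hcentered, hXY, hXZ, hXW]
  ring

lemma fourthJointCumulant_eq_zero_of_indepFun_pairs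
    (hX : MemLp X 2 μ) (hY : MemLp Y 2 μ) (hZ : MemLp Z 2 μ) (hW : MemLp W 2 μ)
    (h : IndepFun (fun ω => (X ω, Y ω)) (fun ω => (Z ω, W ω)) μ) :
    fourthJointCumulant X Y Z W μ = 0 := by
  have hXZ : cov[X, Z; μ] = 0 :=
    IndepFun.covariance_eq_zero (h.comp measurable_fst measurable_fst) hX hZ
  have hXW : cov[X, W; μ] = 0 :=
    IndepFun.covariance_eq_zero (h.comp measurable_fst measurable_snd) hX hW
  have hfactor : ∫ ω, ((X ω - μ[X]) * (Y ω - μ[Y])) * ((Z ω - μ[Z]) * (W ω - μ[W])) ∂μ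
      = cov[X, Y; μ] * cov[Z, W; μ] :=
    h.integral_fun_comp_mul_comp
      (f := fun x => (x.1 - μ[X]) * (x.2 - μ[Y])) (g := fun y => (y.1 - μ[Z]) * (y.2 - μ[W]))
      (hX.aemeasurable.prodMk hY.aemeasurable) (hZ.aemeasurable.prodMk hW.aemeasurable)
      (by fun_prop) (by fun_prop)
  simp only [← mul_assoc] at hfactor
  rw [fourthJointCumulant, hfactor, hXZ, hXW]
  ring

end FourthJointCumulant

section IndependentFamily

variable {Ω ι : Type*} [MeasurableSpace Ω] {μ : Measure Ω} {X : ι → Ω → ℝ}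

lemma indepFun_triple_of_iIndepFun_s11 (hindep : iIndepFun X μ)
    (hX : ∀ i, AEMeasurable (X i) μ) {i j k l : ι} (hij : i ≠ j) (hik : i ≠ k) (hil : i ≠ l) :
    IndepFun (X i) (fun ω => (X j ω, X k ω, X l ω)) μ := by
  classical
  exact (hindep.indepFun_finset₀ {i} {j, k, l} (by simp [hij, hik, hil]) hX).comp
    (φ := fun x : ({i} : Finset ι) → ℝ => x ⟨i, by simp⟩)
    (ψ := fun x : ({j, k, l} : Finset ι) → ℝ =>
      (x ⟨j, by simp⟩, x ⟨k, by simp⟩, x ⟨l, by simp⟩))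
    (by fun_prop) (by fun_prop)

lemma fourthJointCumulant_eq_zero_of_iIndepFun (hindep : iIndepFun X μ)
    (hX : ∀ i, MemLp (X i) 2 μ) {i j k l : ι} (hne : ¬(i = j ∧ i = k ∧ i = l)) :
    fourthJointCumulant (X i) (X j) (X k) (X l) μ = 0 := by
  have := hindep.isProbabilityMeasure
  have hmeas : ∀ i, AEMeasurable (X i) μ := fun i => (hX i).aemeasurable
  have hisolated : ∀ {a b c d : ι}, a ≠ b → a ≠ c → a ≠ d →
      fourthJointCumulant (X a) (X b) (X c) (X d) μ = 0 := fun hb hc hd =>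
    fourthJointCumulant_eq_zero_of_indepFun_triple (hX _) (hX _) (hX _) (hX _)
      (indepFun_triple_of_iIndepFun_s11 hindep hmeas hb hc hd)
  have hpairs : ∀ {a b : ι}, a ≠ b →
      fourthJointCumulant (X a) (X a) (X b) (X b) μ = 0 := fun hab =>
    fourthJointCumulant_eq_zero_of_indepFun_pairs (hX _) (hX _) (hX _) (hX _)
      (hindep.indepFun_prodMk_prodMk₀ hmeas _ _ _ _ hab hab hab hab)
  have swap := fourthJointCumulant_swap (μ := μ)
  have rotate := fourthJointCumulant_rotate (μ := μ)
  -- Either one index differs from the three others, or the indices form two distinct pairs.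
  by_cases hi : i ≠ j ∧ i ≠ k ∧ i ≠ l
  · exact hisolated hi.1 hi.2.1 hi.2.2
  by_cases hj : j ≠ k ∧ j ≠ l ∧ j ≠ i
  · rw [rotate]
    exact hisolated hj.1 hj.2.1 hj.2.2
  by_cases hk : k ≠ l ∧ k ≠ i ∧ k ≠ j
  · rw [rotate, rotate]
    exact hisolated hk.1 hk.2.1 hk.2.2
  by_cases hl : l ≠ i ∧ l ≠ j ∧ l ≠ k
  · rw [rotate, rotate, rotate]
    exact hisolated hl.1 hl.2.1 hl.2.2
  obtain ⟨rfl, rfl, hne⟩ | ⟨rfl, rfl, hne⟩ | ⟨rfl, rfl, hne⟩ :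
      (j = i ∧ l = k ∧ i ≠ k) ∨ (k = i ∧ l = j ∧ i ≠ j) ∨ (l = i ∧ k = j ∧ i ≠ j) := by
    grind
  · exact hpairs hne
  · rw [rotate, swap, rotate]
    exact hpairs hne.symm
  · rw [rotate]
    exact hpairs hne.symm

lemma fourthJointCumulant_sum_mul_of_iIndepFun [Fintype ι] (hindep : iIndepFun X μ)
    (hX : ∀ i, MemLp (X i) 4 μ) (a b c d : ι → ℝ) :
    fourthJointCumulant (fun ω => ∑ i, a i * X i ω) (fun ω => ∑ i, b i * X i ω)
        (fun ω => ∑ i, c i * X i ω) (fun ω => ∑ i, d i * X i ω) μ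
      = ∑ i, a i * b i * c i * d i * fourthJointCumulant (X i) (X i) (X i) (X i) μ := by
  have := hindep.isProbabilityMeasure
  have hmixed : ∀ {i j k l}, ¬(i = j ∧ i = k ∧ i = l) →
      fourthJointCumulant (X i) (X j) (X k) (X l) μ = 0 :=
    fourthJointCumulant_eq_zero_of_iIndepFun hindep fun i => (hX i).mono_exponent (by norm_num)
  rw [fourthJointCumulant_sum_mul hX]
  refine Finset.sum_congr rfl fun i _ => ?_
  rw [Fintype.sum_eq_single i fun j hj => by simp [hmixed, hj.symm],
    Fintype.sum_eq_single i fun k hk => by simp [hmixed, hk.symm],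
    Fintype.sum_eq_single i fun l hl => by simp [hmixed, hl.symm]]
  ring

lemma covariance_sum_mul_of_iIndepFun [Fintype ι] (hindep : iIndepFun X μ)
    (hX : ∀ i, MemLp (X i) 2 μ) (a b : ι → ℝ) :
    cov[fun ω => ∑ i, a i * X i ω, fun ω => ∑ i, b i * X i ω; μ]
      = ∑ i, a i * b i * Var[X i; μ] := by
  classical
  have := hindep.isProbabilityMeasure
  have hcov : ∀ i j, cov[X i, X j; μ] = if i = j then Var[X i; μ] else 0 := fun i j => by
    split_ifs with hij
    · rw [hij, covariance_self (hX j).aemeasurable]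
    · exact (hindep.indepFun hij).covariance_eq_zero (hX i) (hX j)
  rw [covariance_fun_sum_fun_sum (fun i => (hX i).const_mul (a i)) fun i => (hX i).const_mul (b i)]
  simp only [covariance_const_mul_left, covariance_const_mul_right, hcov, mul_ite, mul_zero,
    Finset.sum_ite_eq, Finset.mem_univ, if_true]
  exact Finset.sum_congr rfl fun i _ => by ring

lemma integral_sum_mul_four_of_iIndepFun_of_uncorrelated [Fintype ι] (hindep : iIndepFun X μ)
    (hX : ∀ i, MemLp (X i) 4 μ) (hmean : ∀ i, μ[X i] = 0) (a b c d : ι → ℝ)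
    (had : ∑ i, a i * d i * Var[X i; μ] = 0) (hbd : ∑ i, b i * d i * Var[X i; μ] = 0)
    (hcd : ∑ i, c i * d i * Var[X i; μ] = 0) :
    ∫ ω, (∑ i, a i * X i ω) * (∑ i, b i * X i ω) * (∑ i, c i * X i ω) * (∑ i, d i * X i ω) ∂μ
      = ∑ i, a i * b i * c i * d i * fourthJointCumulant (X i) (X i) (X i) (X i) μ := by
  have := hindep.isProbabilityMeasure
  have hX₂ : ∀ i, MemLp (X i) 2 μ := fun i => (hX i).mono_exponent (by norm_num)
  have hmean_sum : ∀ e : ι → ℝ, ∫ ω, ∑ i, e i * X i ω ∂μ = 0 := fun e => by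
    rw [integral_finsetSum _ fun i _ => ((hX₂ i).integrable (by norm_num)).const_mul (e i)]
    simp only [integral_const_mul, hmean, mul_zero, Finset.sum_const_zero]
  have hcov := covariance_sum_mul_of_iIndepFun hindep hX₂
  rw [integral_mul_eq_fourthJointCumulant_of_covariance_eq_zero (hmean_sum a) (hmean_sum b)
      (hmean_sum c) (hmean_sum d) ((hcov a d).trans had) ((hcov b d).trans hbd)
      ((hcov c d).trans hcd),
    fourthJointCumulant_sum_mul_of_iIndepFun hindep hX]

end IndependentFamily

lemma sum_mul_inv_one_add_sum_sub_one {ι : Type*} [Fintype ι] {t : ℝ} {r : ι → ℝ}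
    (h : 1 + t * ∑ i, r i ≠ 0) :
    ∑ i, t * r i * (1 + t * ∑ i, r i)⁻¹ - 1 = -(1 + t * ∑ i, r i)⁻¹ := by
  rw [← Finset.sum_mul, ← Finset.mul_sum]
  field_simp
  ring

section Cluster

variable {Ω ι : Type*} [MeasurableSpace Ω] {μ : Measure Ω} [Fintype ι] [DecidableEq ι]
  {v : Ω → ℝ} {ε : ι → Ω → ℝ}

lemma integral_cluster_mul_of_uncorrelated
    (hindep : iIndepFun (fun i : Option ι => i.elim v ε) μ)
    (hv : MemLp v 4 μ) (hε : ∀ j, MemLp (ε j) 4 μ) (hEv : μ[v] = 0) (hEε : ∀ j, μ[ε j] = 0)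
    (c : ℝ) (b : ι → ℝ) (hcb : ∀ l, c * Var[v; μ] + b l * Var[ε l; μ] = 0) (j k l : ι) :
    ∫ ω, (v ω + ε j ω) * (v ω + ε k ω) * (v ω + ε l ω) * (c * v ω + ∑ h, b h * ε h ω) ∂μ
      = c * fourthJointCumulant v v v v μ
        + if l = j ∧ l = k then b l * fourthJointCumulant (ε l) (ε l) (ε l) (ε l) μ else 0 := by
  have hresponse : ∀ l, ∑ i : Option ι, i.elim 1 (Pi.single l 1) * i.elim c b
      * Var[i.elim v ε; μ] = 0 := fun l => by
    simpa [Fintype.sum_option, Pi.single_apply] using hcb l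
  have hmoment := integral_sum_mul_four_of_iIndepFun_of_uncorrelated hindep
    (Option.rec hv hε) (Option.rec hEv hEε) (fun i => i.elim 1 (Pi.single j 1))
    (fun i => i.elim 1 (Pi.single k 1)) (fun i => i.elim 1 (Pi.single l 1))
    (fun i => i.elim c b) (hresponse j) (hresponse k) (hresponse l)
  simpa [Fintype.sum_option, Pi.single_apply, and_comm (a := l = j), ite_and] using hmoment

end Cluster

theorem stmt_11_general {Ω ι : Type*} [MeasurableSpace Ω] {μ : Measure Ω} [Fintype ι]
    [DecidableEq ι] {v : Ω → ℝ} {ε : ι → Ω → ℝ}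
    (hindep : iIndepFun (fun i : Option ι => i.elim v ε) μ)
    (hv4 : MemLp v 4 μ) (hε4 : ∀ j, MemLp (ε j) 4 μ)
    (hEv : ∫ ω, v ω ∂μ = 0) (hEε : ∀ j, ∫ ω, ε j ω ∂μ = 0)
    {τsq : ℝ} (hEvsq : ∫ ω, v ω ^ 2 ∂μ = τsq)
    {s : ι → ℝ} (hs : ∀ j, 0 < s j) (hEεsq : ∀ j, ∫ ω, ε j ω ^ 2 ∂μ = s j)
    {κv : ℝ} (hEv4 : ∫ ω, v ω ^ 4 ∂μ = κv * τsq ^ 2)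
    {κε : ι → ℝ} (hEε4 : ∀ j, ∫ ω, ε j ω ^ 4 ∂μ = κε j * s j ^ 2)
    {η : ℝ} (hη : η = 1 + τsq * ∑ h, (s h)⁻¹)
    {lam : ι → ℝ} (hlam : ∀ j, lam j = τsq * (s j)⁻¹ * η⁻¹)
    {w : Ω → ℝ} (hw : ∀ ω, w ω = (∑ h, lam h - 1) * v ω + ∑ h, lam h * ε h ω) (j k : ι) :
    ∑ l, ∫ ω, (v ω + ε j ω) * (v ω + ε k ω) * (v ω + ε l ω) * w ω ∂μ
      = τsq * η⁻¹ * (Fintype.card ι * τsq * (3 - κv)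
          + s j * (κε j - 3) * if j = k then 1 else 0) := by
  have hη0 : η ≠ 0 := by
    have hτ : 0 ≤ τsq := hEvsq ▸ integral_nonneg fun ω => sq_nonneg (v ω)
    have hprec : 0 ≤ ∑ h, (s h)⁻¹ := Finset.sum_nonneg fun h _ => (inv_pos.2 (hs h)).le
    rw [hη]
    positivity
  have hweights : ∑ h, lam h - 1 = -η⁻¹ := by
    simp only [hlam]
    rw [hη, sum_mul_inv_one_add_sum_sub_one (hη ▸ hη0)]
  have hlams : ∀ l, lam l * s l = τsq * η⁻¹ := fun l => by
    rw [hlam]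
    field_simp [(hs l).ne']
  have hVarv : Var[v; μ] = τsq := by
    rw [variance_of_integral_eq_zero hv4.aemeasurable hEv, hEvsq]
  have hVarε : ∀ l, Var[ε l; μ] = s l := fun l => by
    rw [variance_of_integral_eq_zero (hε4 l).aemeasurable (hEε l), hEεsq]
  have hterm := integral_cluster_mul_of_uncorrelated hindep hv4 hε4 hEv hEε (-η⁻¹) lam
    (fun l => by rw [hVarv, hVarε, hlams]; ring) j k
  simp only [hw, hweights, hterm, fourthJointCumulant_self_of_integral_eq_zero hEv,
    fourthJointCumulant_self_of_integral_eq_zero (hEε _), hEvsq, hEεsq, hEv4, hEε4, ite_and,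
    Finset.sum_add_distrib, Finset.sum_const, Finset.sum_ite_eq', Finset.mem_univ, if_true,
    Finset.card_univ, nsmul_eq_mul]
  split_ifs with hjk
  · subst hjk
    linear_combination (κε j - 3) * s j * hlams j
  · ring

/-- In the one-cluster model with finite fourth moments,
`∑_ℓ E[(v+ε_j)(v+ε_k)(v+ε_ℓ) w] = τ² η⁻¹ [n τ² (3 − κ_v) + σ_j² (κ_ε − 3) 1{j=k}]`,
where `w = (∑ λ_h − 1) v + ∑ λ_h ε_h`. -/
theorem stmt_11 {Ω : Type*} [MeasurableSpace Ω] (μ : Measure Ω) [IsProbabilityMeasure μ]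
    (n : ℕ) (hn : 1 ≤ n) (v : Ω → ℝ) (ε : Fin n → Ω → ℝ)
    (hv : Measurable v) (hε : ∀ j, Measurable (ε j))
    (hindep : iIndepFun (m := fun _ : Option (Fin n) => (inferInstance : MeasurableSpace ℝ))
      (fun i => Option.elim i v ε) μ)
    (τsq : ℝ) (hτ : 0 ≤ τsq) (s : Fin n → ℝ) (hs : ∀ j, 0 < s j)
    (hv4 : MemLp v 4 μ) (hε4 : ∀ j, MemLp (ε j) 4 μ)
    (hEv : ∫ ω, v ω ∂μ = 0) (hEvsq : ∫ ω, (v ω) ^ 2 ∂μ = τsq)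
    (hEε : ∀ j, ∫ ω, ε j ω ∂μ = 0) (hEεsq : ∀ j, ∫ ω, (ε j ω) ^ 2 ∂μ = s j)
    (hEv3 : ∫ ω, (v ω) ^ 3 ∂μ = 0) (hEε3 : ∀ j, ∫ ω, (ε j ω) ^ 3 ∂μ = 0)
    (κv κε : ℝ) (hEv4 : ∫ ω, (v ω) ^ 4 ∂μ = κv * τsq ^ 2)
    (hEε4 : ∀ j, ∫ ω, (ε j ω) ^ 4 ∂μ = κε * (s j) ^ 2)
    (η : ℝ) (hη : η = 1 + τsq * ∑ h, (s h)⁻¹)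
    (lam : Fin n → ℝ) (hlam : ∀ j, lam j = τsq * (s j)⁻¹ * η⁻¹)
    (w : Ω → ℝ) (hw : ∀ ω, w ω = (∑ h, lam h - 1) * v ω + ∑ h, lam h * ε h ω) :
    ∀ j k, ∑ l, ∫ ω, (v ω + ε j ω) * (v ω + ε k ω) * (v ω + ε l ω) * w ω ∂μ
      = τsq * η⁻¹ * ((n : ℝ) * τsq * (3 - κv)
          + s j * (κε - 3) * (if j = k then 1 else 0)) :=
by
  simpa only [Fintype.card_fin] using
    stmt_11_general hindep hv4 hε4 hEv hEε hEvsq hs hEεsq hEv4 hEε4 hη hlam hw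
end

section
/- Under the one-cluster model with finite fourth moments, writing ε̄ = n^{-1} Σ_{k=1}^n ε_k, for all j, h ∈ {1, …, n}: E[ (ε_h − ε̄)² (v + ε_j) w ] = τ² η^{-1} (κ_ε − 3) σ_j² ( (1 − 2 n^{-1}) · 1{j = h} + n^{-2} ), where w = (Σ_{k=1}^n λ_k − 1) v + Σ_{k=1}^n λ_k ε_k. (This is the per-observation identity behind the cross-moment vector M_{2ij}(φ, κ) involving the estimating-function statistic u_{2i} for the variance-function parameter γ.) -/
open MeasureTheory ProbabilityTheory

/-! The fourth moment of four linear forms in independent centred variables is the sum over the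
three Gaussian pairings plus a term linear in the fourth cumulants of the variables. The statistic
`w` is the error of the best linear predictor of `v`: the normal equations
`λ_k σ_k² = τ² (1 − ∑ λ)` make it orthogonal to every observation `v + ε_k`, hence also to every
contrast `∑ a_k ε_k` with `∑ a_k = 0`, such as `ε_h − ε̄`. So all three pairings of
`E[(∑ a_k ε_k)² (v + ε_j) w]` vanish, and the only variable occurring in all four factors is `ε_j`,
which contributes `a_j² λ_j (κ_ε − 3) σ_j⁴`, where `λ_j σ_j² = τ² η⁻¹`. -/

section LinearForms

variable {Ω ι : Type*} {mΩ : MeasurableSpace Ω} {μ : Measure Ω} {X : ι → Ω → ℝ}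

/-- The fourth cumulant `E[Y⁴] − 3 E[Y²]²` of a centred random variable, which measures the
departure of its fourth moment from the Gaussian one. The formula is not the fourth cumulant of a
variable with nonzero mean. -/
noncomputable def centredFourthCumulant (Y : Ω → ℝ) (μ : Measure Ω) : ℝ :=
  ∫ ω, Y ω ^ 4 ∂μ - 3 * (∫ ω, Y ω ^ 2 ∂μ) ^ 2

/-- The linear form `∑ aᵢ Xᵢ` in the random variables `Xᵢ`. -/
def linearForm [Fintype ι] (X : ι → Ω → ℝ) (a : ι → ℝ) (ω : Ω) : ℝ :=
  ∑ i, a i * X i ω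

lemma integral_sum_mul_sum {κ : Type*} [Fintype ι] [Fintype κ] {Y : κ → Ω → ℝ}
    (hXY : ∀ i k, Integrable (fun ω => X i ω * Y k ω) μ) (a : ι → ℝ) (b : κ → ℝ) :
    ∫ ω, (∑ i, a i * X i ω) * (∑ k, b k * Y k ω) ∂μ =
      ∑ i, ∑ k, a i * b k * ∫ ω, X i ω * Y k ω ∂μ := by
  have hterm : ∀ i k, Integrable (fun ω => a i * b k * (X i ω * Y k ω)) μ :=
    fun i k => (hXY i k).const_mul _
  simp_rw [Finset.sum_mul_sum, mul_mul_mul_comm _ _ (b _)]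
  rw [integral_finsetSum _ fun i _ => integrable_finsetSum _ fun k _ => hterm i k]
  simp_rw [integral_finsetSum _ fun k _ => hterm _ k, integral_const_mul]

lemma integral_linearForm_mul_linearForm [Fintype ι] (hX : ∀ i, MemLp (X i) 2 μ)
    (horth : Pairwise fun i j => ∫ ω, X i ω * X j ω ∂μ = 0) (a b : ι → ℝ) :
    ∫ ω, linearForm X a ω * linearForm X b ω ∂μ = ∑ i, a i * b i * ∫ ω, X i ω ^ 2 ∂μ := by
  unfold linearForm
  rw [integral_sum_mul_sum fun i k => (hX i).integrable_mul (hX k)]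
  refine Finset.sum_congr rfl fun i _ => ?_
  rw [Finset.sum_eq_single i (fun k _ hki => by rw [horth hki.symm, mul_zero])
    (fun hi => absurd (Finset.mem_univ i) hi)]
  simp only [sq]

lemma memLp_mul_of_memLp_two_mul {p : ENNReal} {f g : Ω → ℝ} (hf : MemLp f (2 * p) μ)
    (hg : MemLp g (2 * p) μ) : MemLp (fun ω => f ω * g ω) p μ := by
  have : ENNReal.HolderTriple (2 * p) (2 * p) p := ⟨by
    rw [← two_mul, ENNReal.mul_inv (by simp) (by simp), ← mul_assoc,
      ENNReal.mul_inv_cancel (by simp) (by simp), one_mul]⟩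
  exact hg.mul' hf

lemma pairwise_integral_mul_eq_zero (hindep : iIndepFun X μ) (hX : ∀ i, AEMeasurable (X i) μ)
    (hmean : ∀ i, ∫ ω, X i ω ∂μ = 0) : Pairwise fun i j => ∫ ω, X i ω * X j ω ∂μ = 0 := by
  intro i j hij
  rw [(hindep.indepFun hij).integral_fun_mul_eq_mul_integral (hX i).aestronglyMeasurable
    (hX j).aestronglyMeasurable, hmean i, zero_mul]

lemma integral_mul_eq_ite [DecidableEq ι] (hindep : iIndepFun X μ)
    (hX : ∀ i, AEMeasurable (X i) μ) (hmean : ∀ i, ∫ ω, X i ω ∂μ = 0) (i j : ι) :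
    ∫ ω, X i ω * X j ω ∂μ = if i = j then ∫ ω, X i ω ^ 2 ∂μ else 0 := by
  split_ifs with hij
  · simp only [hij, sq]
  · exact pairwise_integral_mul_eq_zero hindep hX hmean hij

lemma integral_sq_mul_sq_of_ne (hindep : iIndepFun X μ) (hX : ∀ i, AEMeasurable (X i) μ) {i j : ι}
    (hij : i ≠ j) :
    ∫ ω, X i ω ^ 2 * X j ω ^ 2 ∂μ = (∫ ω, X i ω ^ 2 ∂μ) * ∫ ω, X j ω ^ 2 ∂μ :=
  ((hindep.indepFun hij).comp (φ := (· ^ 2)) (ψ := (· ^ 2)) (by fun_prop)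
    (by fun_prop)).integral_fun_mul_eq_mul_integral
    ((hX i).pow_const 2).aestronglyMeasurable ((hX j).pow_const 2).aestronglyMeasurable

lemma integral_mul_mul_mul_eq_zero_of_ne (hindep : iIndepFun X μ)
    (hX : ∀ i, AEMeasurable (X i) μ) {i j k l : ι} (hmean : ∫ ω, X i ω ∂μ = 0)
    (hij : i ≠ j) (hik : i ≠ k) (hil : i ≠ l) :
    ∫ ω, X i ω * X j ω * (X k ω * X l ω) ∂μ = 0 := by
  classical
  have hdisj : Disjoint ({i} : Finset ι) {j, k, l} := by simp [hij, hik, hil]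
  have hprod : IndepFun (X i) (fun ω => X j ω * (X k ω * X l ω)) μ :=
    (hindep.indepFun_finset₀ {i} {j, k, l} hdisj hX).comp
      (φ := fun x : ({i} : Finset ι) → ℝ => x ⟨i, by simp⟩)
      (ψ := fun x : ({j, k, l} : Finset ι) → ℝ =>
        x ⟨j, by simp⟩ * (x ⟨k, by simp⟩ * x ⟨l, by simp⟩))
      (by fun_prop) (by fun_prop)
  simp_rw [mul_assoc (X i _)]
  rw [hprod.integral_fun_mul_eq_mul_integral (hX i).aestronglyMeasurable
    ((hX j).mul ((hX k).mul (hX l))).aestronglyMeasurable, hmean, zero_mul]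

lemma integral_mul_self_mul_mul [DecidableEq ι] (hindep : iIndepFun X μ)
    (hX : ∀ i, AEMeasurable (X i) μ) (hmean : ∀ i, ∫ ω, X i ω ∂μ = 0) (i k l : ι) :
    ∫ ω, X i ω * X i ω * (X k ω * X l ω) ∂μ =
      (∫ ω, X i ω * X i ω ∂μ) * (∫ ω, X k ω * X l ω ∂μ)
      + 2 * ((∫ ω, X i ω * X k ω ∂μ) * ∫ ω, X i ω * X l ω ∂μ)
      + if i = k ∧ i = l then centredFourthCumulant (X i) μ else 0 := by
  simp only [integral_mul_eq_ite hindep hX hmean, if_true]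
  rcases eq_or_ne k l with rfl | hkl
  · rcases eq_or_ne i k with rfl | hik
    · have hpow : ∀ ω, X i ω * X i ω * (X i ω * X i ω) = X i ω ^ 4 := fun ω => by ring
      simp only [hpow, centredFourthCumulant, if_true, and_self]
      ring
    · simpa [hik, sq] using integral_sq_mul_sq_of_ne hindep hX hik
  · rcases eq_or_ne i k with rfl | hik
    · simpa [hkl, mul_comm, mul_left_comm] using
        integral_mul_mul_mul_eq_zero_of_ne hindep hX (hmean l) hkl.symm hkl.symm hkl.symm
    · simpa [hkl, hik, mul_comm, mul_left_comm] using
        integral_mul_mul_mul_eq_zero_of_ne hindep hX (hmean k) hkl hik.symm hik.symm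

lemma integral_mul_mul_mul_eq_pairings [DecidableEq ι] (hindep : iIndepFun X μ)
    (hX : ∀ i, AEMeasurable (X i) μ) (hmean : ∀ i, ∫ ω, X i ω ∂μ = 0) (i j k l : ι) :
    ∫ ω, X i ω * X j ω * (X k ω * X l ω) ∂μ =
      (∫ ω, X i ω * X j ω ∂μ) * (∫ ω, X k ω * X l ω ∂μ)
      + (∫ ω, X i ω * X k ω ∂μ) * (∫ ω, X j ω * X l ω ∂μ)
      + (∫ ω, X i ω * X l ω ∂μ) * (∫ ω, X j ω * X k ω ∂μ)
      + if i = j ∧ i = k ∧ i = l then centredFourthCumulant (X i) μ else 0 := by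
  have hself := integral_mul_self_mul_mul hindep hX hmean i
  have hcomm : ∀ p q, ∫ ω, X p ω * X q ω ∂μ = ∫ ω, X q ω * X p ω ∂μ := fun p q => by
    simp only [mul_comm]
  by_cases hij : i = j
  · subst hij
    rw [hself k l]
    simp only [true_and]
    ring
  by_cases hik : i = k
  · subst hik
    have hswap : ∀ ω, X i ω * X j ω * (X i ω * X l ω) = X i ω * X i ω * (X j ω * X l ω) :=
      fun ω => by ring
    simp only [hswap, hself j l, hcomm j i, hij, false_and, if_false]
    ring
  by_cases hil : i = l
  · subst hil
    have hswap : ∀ ω, X i ω * X j ω * (X k ω * X i ω) = X i ω * X i ω * (X j ω * X k ω) :=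
      fun ω => by ring
    simp only [hswap, hself j k, hcomm j i, hcomm k i, hij, false_and, if_false]
    ring
  rw [integral_mul_mul_mul_eq_zero_of_ne hindep hX (hmean i) hij hik hil]
  simp [integral_mul_eq_ite hindep hX hmean, hij, hik, hil]

lemma integral_linearForm_mul_four_eq_sum [Fintype ι] (hX : ∀ i, MemLp (X i) 4 μ)
    (a b c d : ι → ℝ) :
    ∫ ω, linearForm X a ω * linearForm X b ω * (linearForm X c ω * linearForm X d ω) ∂μ =
      ∑ i, ∑ j, ∑ k, ∑ l,
        a i * b j * (c k * d l) * ∫ ω, X i ω * X j ω * (X k ω * X l ω) ∂μ := by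
  have hX_mul : ∀ i j, MemLp (fun ω => X i ω * X j ω) 2 μ := fun i j => by
    rw [show (4 : ENNReal) = 2 * 2 by norm_num] at hX
    exact memLp_mul_of_memLp_two_mul (hX i) (hX j)
  have hprod : ∀ (e f : ι → ℝ) ω, linearForm X e ω * linearForm X f ω =
      ∑ p : ι × ι, e p.1 * f p.2 * (X p.1 ω * X p.2 ω) := fun e f ω => by
    simp only [linearForm, Fintype.sum_mul_sum, Fintype.sum_prod_type, mul_mul_mul_comm]
  simp_rw [hprod]
  rw [integral_sum_mul_sum (X := fun (p : ι × ι) ω => X p.1 ω * X p.2 ω)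
    (Y := fun (p : ι × ι) ω => X p.1 ω * X p.2 ω) fun p q =>
      (hX_mul p.1 p.2).integrable_mul (hX_mul q.1 q.2)]
  simp only [Fintype.sum_prod_type]

theorem integral_linearForm_mul_four [Fintype ι] (hindep : iIndepFun X μ)
    (hX : ∀ i, MemLp (X i) 4 μ) (hmean : ∀ i, ∫ ω, X i ω ∂μ = 0) (a b c d : ι → ℝ) :
    ∫ ω, linearForm X a ω * linearForm X b ω * (linearForm X c ω * linearForm X d ω) ∂μ =
      (∫ ω, linearForm X a ω * linearForm X b ω ∂μ) * (∫ ω, linearForm X c ω * linearForm X d ω ∂μ)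
      + (∫ ω, linearForm X a ω * linearForm X c ω ∂μ)
        * (∫ ω, linearForm X b ω * linearForm X d ω ∂μ)
      + (∫ ω, linearForm X a ω * linearForm X d ω ∂μ)
        * (∫ ω, linearForm X b ω * linearForm X c ω ∂μ)
      + ∑ i, a i * b i * c i * d i * centredFourthCumulant (X i) μ := by
  classical
  have := hindep.isProbabilityMeasure
  have hae : ∀ i, AEMeasurable (X i) μ := fun i => (hX i).aemeasurable
  have hcov := integral_linearForm_mul_linearForm (fun i => (hX i).mono_exponent (by norm_num))
    (pairwise_integral_mul_eq_zero hindep hae hmean)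
  rw [integral_linearForm_mul_four_eq_sum hX]
  simp_rw [integral_mul_mul_mul_eq_pairings hindep hae hmean, hcov,
    integral_mul_eq_ite hindep hae hmean, mul_add, Finset.sum_add_distrib, Finset.sum_mul_sum]
  simp only [ite_and, mul_ite, ite_mul, mul_zero, zero_mul, Finset.sum_ite_irrel,
    Finset.sum_const_zero, Finset.sum_ite_eq, Finset.mem_univ, if_true]
  congr 1
  · congr 1
    · congr 1
      all_goals exact Fintype.sum_congr _ _ fun i => Fintype.sum_congr _ _ fun j => by ring
    · exact Fintype.sum_congr _ _ fun i => Fintype.sum_congr _ _ fun j => by ring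
  · exact Fintype.sum_congr _ _ fun i => by ring

lemma integral_linearForm_sq_mul_mul_of_orthogonal [Fintype ι] (hindep : iIndepFun X μ)
    (hX : ∀ i, MemLp (X i) 4 μ) (hmean : ∀ i, ∫ ω, X i ω ∂μ = 0) {a c d : ι → ℝ}
    (had : ∫ ω, linearForm X a ω * linearForm X d ω ∂μ = 0)
    (hcd : ∫ ω, linearForm X c ω * linearForm X d ω ∂μ = 0) :
    ∫ ω, linearForm X a ω ^ 2 * linearForm X c ω * linearForm X d ω ∂μ =
      ∑ i, a i ^ 2 * c i * d i * centredFourthCumulant (X i) μ := by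
  simp only [sq, mul_assoc (linearForm X a _ * linearForm X a _),
    integral_linearForm_mul_four hindep hX hmean, had, hcd, mul_zero, zero_mul, zero_add]

end LinearForms

section NestedError

variable {Ω ι : Type*} {mΩ : MeasurableSpace Ω} {μ : Measure Ω} {v : Ω → ℝ} {ε : ι → Ω → ℝ}

/-- The random effect `v` (at the index `none`) and the errors `ε` of a cluster as one family, so
that statistics of the cluster become linear forms in a single independent family. -/
def clusterVariables (v : Ω → ℝ) (ε : ι → Ω → ℝ) (i : Option ι) : Ω → ℝ :=
  i.elim v ε

variable [Fintype ι]

/-- The error `∑ λ_k (v + ε_k) − v` of predicting `v` by the combination of the observations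
`v + ε_k` with weights `λ`, sorted into its `v` and `ε` parts. -/
def predictionError (v : Ω → ℝ) (ε : ι → Ω → ℝ) (lam : ι → ℝ) (ω : Ω) : ℝ :=
  (∑ k, lam k - 1) * v ω + ∑ k, lam k * ε k ω

/-- The coefficients of `ε_h − ε̄` as a linear form in the `ε_k`. -/
noncomputable def deviationWeight [DecidableEq ι] (h k : ι) : ℝ :=
  (if k = h then 1 else 0) - (Fintype.card ι : ℝ)⁻¹

lemma sum_deviationWeight [DecidableEq ι] (h : ι) : ∑ k, deviationWeight h k = 0 := by
  have : Nonempty ι := ⟨h⟩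
  simp [deviationWeight, Finset.sum_sub_distrib]

lemma sum_deviationWeight_mul [DecidableEq ι] (h : ι) (x : ι → ℝ) :
    ∑ k, deviationWeight h k * x k = x h - (Fintype.card ι : ℝ)⁻¹ * ∑ k, x k := by
  simp [deviationWeight, sub_mul, Finset.sum_sub_distrib, Finset.mul_sum]

lemma linearForm_clusterVariables (a : Option ι → ℝ) (ω : Ω) :
    linearForm (clusterVariables v ε) a ω = a none * v ω + ∑ k, a (some k) * ε k ω :=
  Fintype.sum_option _

lemma integral_linearForm_mul_predictionError (hX : ∀ i, MemLp (clusterVariables v ε i) 2 μ)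
    (horth : Pairwise fun i j => ∫ ω, clusterVariables v ε i ω * clusterVariables v ε j ω ∂μ = 0)
    {lam : ι → ℝ}
    (hnormal : ∀ k, lam k * ∫ ω, ε k ω ^ 2 ∂μ = (∫ ω, v ω ^ 2 ∂μ) * (1 - ∑ l, lam l))
    (a : Option ι → ℝ) :
    ∫ ω, linearForm (clusterVariables v ε) a ω * predictionError v ε lam ω ∂μ =
      (∑ k, a (some k) - a none) * ((∫ ω, v ω ^ 2 ∂μ) * (1 - ∑ k, lam k)) := by
  have hcov := integral_linearForm_mul_linearForm hX horth a fun i => i.elim (∑ k, lam k - 1) lam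
  simp only [linearForm_clusterVariables, Fintype.sum_option, clusterVariables, Option.elim,
    mul_assoc, hnormal, ← Finset.sum_mul] at hcov
  simp only [linearForm_clusterVariables, predictionError, hcov]
  ring

theorem integral_contrast_sq_mul_observation_mul_predictionError
    (hindep : iIndepFun (clusterVariables v ε) μ) (hX : ∀ i, MemLp (clusterVariables v ε i) 4 μ)
    (hmean : ∀ i, ∫ ω, clusterVariables v ε i ω ∂μ = 0) {lam : ι → ℝ}
    (hnormal : ∀ k, lam k * ∫ ω, ε k ω ^ 2 ∂μ = (∫ ω, v ω ^ 2 ∂μ) * (1 - ∑ l, lam l))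
    {a : ι → ℝ} (ha : ∑ k, a k = 0) (j : ι) :
    ∫ ω, (∑ k, a k * ε k ω) ^ 2 * (v ω + ε j ω) * predictionError v ε lam ω ∂μ =
      a j ^ 2 * lam j * centredFourthCumulant (ε j) μ := by
  classical
  have := hindep.isProbabilityMeasure
  have hcov := integral_linearForm_mul_predictionError
    (fun i => (hX i).mono_exponent (by norm_num))
    (pairwise_integral_mul_eq_zero hindep (fun i => (hX i).aemeasurable) hmean) hnormal
  let contrast : Option ι → ℝ := fun i => i.elim 0 a
  let observation : Option ι → ℝ := fun i => i.elim 1 (Pi.single j 1)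
  let error : Option ι → ℝ := fun i => i.elim (∑ k, lam k - 1) lam
  have hcontrast : ∀ ω, linearForm (clusterVariables v ε) contrast ω = ∑ k, a k * ε k ω :=
    fun ω => by simp [linearForm_clusterVariables, contrast]
  have hobservation : ∀ ω, linearForm (clusterVariables v ε) observation ω = v ω + ε j ω :=
    fun ω => by simp [linearForm_clusterVariables, observation, Pi.single_apply]
  have herror : linearForm (clusterVariables v ε) error = predictionError v ε lam :=
    funext fun ω => linearForm_clusterVariables error ω
  have hcontrast_error : ∫ ω, linearForm (clusterVariables v ε) contrast ω
      * linearForm (clusterVariables v ε) error ω ∂μ = 0 := by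
    rw [herror, hcov]
    simp [contrast, ha]
  have hobservation_error : ∫ ω, linearForm (clusterVariables v ε) observation ω
      * linearForm (clusterVariables v ε) error ω ∂μ = 0 := by
    rw [herror, hcov]
    simp [observation]
  have hmoment := integral_linearForm_sq_mul_mul_of_orthogonal hindep hX hmean
    hcontrast_error hobservation_error
  simp only [hcontrast, hobservation, herror] at hmoment
  rw [hmoment, Fintype.sum_option]
  simp [contrast, observation, error, clusterVariables, Pi.single_apply]

lemma one_sub_sum_shrinkage {τsq η : ℝ} {s lam : ι → ℝ} (hη : η = 1 + τsq * ∑ k, (s k)⁻¹)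
    (hη_ne : η ≠ 0) (hlam : ∀ k, lam k = τsq * (s k)⁻¹ * η⁻¹) : 1 - ∑ k, lam k = η⁻¹ := by
  have hsum : ∑ k, lam k = (η - 1) * η⁻¹ := by
    simp_rw [hlam, ← Finset.sum_mul, ← Finset.mul_sum, hη, add_sub_cancel_left]
  rw [hsum, sub_mul, mul_inv_cancel₀ hη_ne, one_mul, sub_sub_cancel]

end NestedError

theorem stmt_14_general {Ω ι : Type*} [MeasurableSpace Ω] {μ : Measure Ω} [Fintype ι]
    [DecidableEq ι] {v : Ω → ℝ} {ε : ι → Ω → ℝ} (hindep : iIndepFun (clusterVariables v ε) μ)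
    (hv4 : MemLp v 4 μ) (hε4 : ∀ k, MemLp (ε k) 4 μ)
    (hEv : ∫ ω, v ω ∂μ = 0) (hEε : ∀ k, ∫ ω, ε k ω ∂μ = 0)
    {τsq : ℝ} (hEvsq : ∫ ω, v ω ^ 2 ∂μ = τsq)
    {s : ι → ℝ} (hs : ∀ k, 0 < s k) (hEεsq : ∀ k, ∫ ω, ε k ω ^ 2 ∂μ = s k)
    {j : ι} {κε : ℝ} (hEε4 : ∫ ω, ε j ω ^ 4 ∂μ = κε * s j ^ 2)
    {η : ℝ} (hη : η = 1 + τsq * ∑ k, (s k)⁻¹)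
    {lam : ι → ℝ} (hlam : ∀ k, lam k = τsq * (s k)⁻¹ * η⁻¹)
    {w : Ω → ℝ} (hw : ∀ ω, w ω = (∑ k, lam k - 1) * v ω + ∑ k, lam k * ε k ω) (h : ι) :
    ∫ ω, (ε h ω - (Fintype.card ι : ℝ)⁻¹ * ∑ k, ε k ω) ^ 2 * (v ω + ε j ω) * w ω ∂μ =
      τsq * η⁻¹ * (κε - 3) * s j *
        ((1 - 2 * (Fintype.card ι : ℝ)⁻¹) * (if j = h then 1 else 0)
          + ((Fintype.card ι : ℝ) ^ 2)⁻¹) := by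
  have hη_ne : η ≠ 0 := by
    have hτ : 0 ≤ τsq := hEvsq ▸ integral_nonneg fun ω => sq_nonneg _
    have hsum : 0 ≤ ∑ k, (s k)⁻¹ := Finset.sum_nonneg fun k _ => (inv_pos.mpr (hs k)).le
    rw [hη]
    positivity
  have hlam_mul : ∀ k, lam k * s k = τsq * η⁻¹ := fun k => by
    rw [hlam, mul_right_comm, inv_mul_cancel_right₀ (hs k).ne']
  have hnormal : ∀ k, lam k * ∫ ω, ε k ω ^ 2 ∂μ = (∫ ω, v ω ^ 2 ∂μ) * (1 - ∑ l, lam l) :=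
    fun k => by rw [hEεsq, hEvsq, hlam_mul, one_sub_sum_shrinkage hη hη_ne hlam]
  have hcontrast := integral_contrast_sq_mul_observation_mul_predictionError hindep
    (Option.forall.2 ⟨hv4, hε4⟩) (Option.forall.2 ⟨hEv, hEε⟩) hnormal (sum_deviationWeight h) j
  have hcumulant : centredFourthCumulant (ε j) μ = (κε - 3) * s j ^ 2 := by
    rw [centredFourthCumulant, hEε4, hEεsq]
    ring
  simp only [sum_deviationWeight_mul h, predictionError, ← hw, hcumulant] at hcontrast
  calc
    _ = deviationWeight h j ^ 2 * lam j * ((κε - 3) * s j ^ 2) := hcontrast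
    _ = deviationWeight h j ^ 2 * (lam j * s j) * (κε - 3) * s j := by ring
    _ = _ := by
      rw [hlam_mul, deviationWeight]
      split_ifs <;> ring

/-- In the one-cluster model with finite fourth moments, with
`ε̄ = n⁻¹ ∑ ε_k`, for all `j, h`:
`E[(ε_h − ε̄)² (v+ε_j) w] = τ² η⁻¹ (κ_ε − 3) σ_j² ((1 − 2n⁻¹) 1{j=h} + n⁻²)`,
where `w = (∑ λ_k − 1) v + ∑ λ_k ε_k`. -/
theorem stmt_14 {Ω : Type*} [MeasurableSpace Ω] (μ : Measure Ω) [IsProbabilityMeasure μ]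
    (n : ℕ) (hn : 1 ≤ n) (v : Ω → ℝ) (ε : Fin n → Ω → ℝ)
    (hv : Measurable v) (hε : ∀ j, Measurable (ε j))
    (hindep : iIndepFun (m := fun _ : Option (Fin n) => (inferInstance : MeasurableSpace ℝ))
      (fun i => Option.elim i v ε) μ)
    (τsq : ℝ) (hτ : 0 ≤ τsq) (s : Fin n → ℝ) (hs : ∀ j, 0 < s j)
    (hv4 : MemLp v 4 μ) (hε4 : ∀ j, MemLp (ε j) 4 μ)
    (hEv : ∫ ω, v ω ∂μ = 0) (hEvsq : ∫ ω, (v ω) ^ 2 ∂μ = τsq)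
    (hEε : ∀ j, ∫ ω, ε j ω ∂μ = 0) (hEεsq : ∀ j, ∫ ω, (ε j ω) ^ 2 ∂μ = s j)
    (hEv3 : ∫ ω, (v ω) ^ 3 ∂μ = 0) (hEε3 : ∀ j, ∫ ω, (ε j ω) ^ 3 ∂μ = 0)
    (κv κε : ℝ) (hEv4 : ∫ ω, (v ω) ^ 4 ∂μ = κv * τsq ^ 2)
    (hEε4 : ∀ j, ∫ ω, (ε j ω) ^ 4 ∂μ = κε * (s j) ^ 2)
    (η : ℝ) (hη : η = 1 + τsq * ∑ h, (s h)⁻¹)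
    (lam : Fin n → ℝ) (hlam : ∀ j, lam j = τsq * (s j)⁻¹ * η⁻¹)
    (w : Ω → ℝ) (hw : ∀ ω, w ω = (∑ h, lam h - 1) * v ω + ∑ h, lam h * ε h ω) :
    ∀ j h, ∫ ω, (ε h ω - (n : ℝ)⁻¹ * ∑ k, ε k ω) ^ 2 * (v ω + ε j ω) * w ω ∂μ
      = τsq * η⁻¹ * (κε - 3) * s j
          * ((1 - 2 * (n : ℝ)⁻¹) * (if j = h then 1 else 0) + ((n : ℝ) ^ 2)⁻¹) := by
  simpa only [Fintype.card_fin] using fun j h =>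
    stmt_14_general hindep hv4 hε4 hEv hEε hEvsq hs hEεsq (hEε4 j) hη hlam hw h
end
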